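/- arXiv:1805.10072 — 4 statements merged into one kernel-verified Lean document; each statement's English description precedes it below -/
import Mathlib

section
/- Let n ≥ 1 be an integer and let s₁ satisfy 1/2 − 1/(2n) < s₁ < 1/2. Then there exists a constant C(s₁,n) > 0 such that for every family of complex numbers (f_k)_{k ∈ ℤ^{2n}} with A := sup_{k} |f_k| < ∞ and every ψ ∈ ℂ^ℤ with ‖ψ‖_{H^{s₁}} < ∞, one has ∑_{k ∈ ℤ^{2n} satisfying the zero-momentum condition} |f_k| · ∏_{i=1}^{2n} |ψ_{k_i}| ≤ C(s₁,n) · A · ‖ψ‖_{H^{s₁}}^{2n} (in particular the series converges). -/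
/-- If each fibre map `x ↦ (κ x j)_{j ≠ i}` is injective, then the finite sums of the products of
`b` over all coordinates but the `i`-th are bounded by a power of the sum of `b`. -/
theorem sum_prod_ne_le_tsum_pow {S ι α : Type*} [Fintype ι] [DecidableEq ι] (κ : S → ι → α) (i : ι)
    (hκ : ∀ x y, (∀ j, j ≠ i → κ x j = κ y j) → x = y)
    {b : α → ℝ} (hb : ∀ a, 0 ≤ b a) (hsum : Summable b) (F : Finset S) :
    ∑ x ∈ F, ∏ j : {j // j ≠ i}, b (κ x j.val) ≤ (∑' a, b a) ^ (Fintype.card ι - 1) := by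
  classical
  let r : S → {j // j ≠ i} → α := fun x j => κ x j
  have hr : Function.Injective r := fun x y h => hκ x y fun j hj => congrFun h ⟨j, hj⟩
  let T : Finset α := F.biUnion fun x => Finset.univ.image (κ x)
  have hsub : F.image r ⊆ Fintype.piFinset fun _ => T := by
    intro g hg
    obtain ⟨x, hx, rfl⟩ := Finset.mem_image.1 hg
    refine Fintype.mem_piFinset.2 fun j => Finset.mem_biUnion.2 ⟨x, hx, ?_⟩
    exact Finset.mem_image_of_mem _ (Finset.mem_univ _)
  calc ∑ x ∈ F, ∏ j : {j // j ≠ i}, b (κ x j.val)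
      = ∑ g ∈ F.image r, ∏ j, b (g j) := by
        rw [Finset.sum_image hr.injOn]
    _ ≤ ∑ g ∈ Fintype.piFinset fun _ => T, ∏ j, b (g j) :=
        Finset.sum_le_sum_of_subset_of_nonneg hsub fun g _ _ => Finset.prod_nonneg fun j _ => hb _
    _ = (∑ a ∈ T, b a) ^ (Fintype.card ι - 1) := by
        rw [← Finset.prod_univ_sum (fun _ : {j // j ≠ i} => T) (fun _ a => b a)]
        simp [Fintype.card_subtype_compl]
    _ ≤ (∑' a, b a) ^ (Fintype.card ι - 1) :=
        pow_le_pow_left₀ (Finset.sum_nonneg fun a _ => hb a)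
          (hsum.sum_le_tsum T fun a _ => hb a) _

/-- The geometric mean of the products omitting one factor. -/
theorem prod_rpow_le_average_prod_ne {ι : Type*} [Fintype ι] [DecidableEq ι] [Nonempty ι]
    {z : ι → ℝ} (hz : ∀ i, 0 ≤ z i) :
    ∏ i, z i ^ (((Fintype.card ι : ℝ) - 1) / Fintype.card ι) ≤
      ∑ i, (Fintype.card ι : ℝ)⁻¹ * ∏ j : {j // j ≠ i}, z j.val := by
  have hN : (Fintype.card ι : ℝ) ≠ 0 := by exact_mod_cast Fintype.card_ne_zero
  refine le_of_eq_of_le ?_ (Real.geom_mean_le_arith_mean_weighted Finset.univ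
    (fun _ => (Fintype.card ι : ℝ)⁻¹) (fun i => ∏ j : {j // j ≠ i}, z j.val)
    (fun _ _ => by positivity) (by simp [hN]) fun i _ => Finset.prod_nonneg fun j _ => hz _)
  have herase : ∀ (g : ι → ℝ) i, ∏ j : {j // j ≠ i}, g j.val = ∏ j ∈ Finset.univ.erase i, g j :=
    fun g i => (Finset.prod_subtype _ (by simp) g).symm
  simp_rw [← Real.finsetProd_rpow _ _ (fun j _ => hz _)]
  simp_rw [fun i => herase (fun j => z j ^ (Fintype.card ι : ℝ)⁻¹) i]
  rw [Finset.prod_comm' (t' := Finset.univ) (s' := fun j => Finset.univ.erase j)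
    (by simp [eq_comm])]
  refine Finset.prod_congr rfl fun i _ => ?_
  rw [Finset.prod_const, Finset.card_erase_of_mem (Finset.mem_univ i), Finset.card_univ,
    ← Real.rpow_mul_natCast (hz i), Nat.cast_sub Fintype.card_pos]
  congr 1
  push_cast
  ring

/-- A Young type inequality: if every coordinate of a point is determined by the other ones, then
the sum of products of `b ^ ((N - 1) / N)` over the `N` coordinates is at most `‖b‖₁ ^ (N - 1)`. -/
theorem sum_prod_rpow_le_tsum_pow {S ι α : Type*} [Fintype ι] [Nonempty ι] (κ : S → ι → α)
    (hκ : ∀ i x y, (∀ j, j ≠ i → κ x j = κ y j) → x = y)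
    {b : α → ℝ} (hb : ∀ a, 0 ≤ b a) (hsum : Summable b) (F : Finset S) :
    ∑ x ∈ F, ∏ i, b (κ x i) ^ (((Fintype.card ι : ℝ) - 1) / Fintype.card ι) ≤
      (∑' a, b a) ^ (Fintype.card ι - 1) := by
  classical
  have hN : (Fintype.card ι : ℝ) ≠ 0 := by exact_mod_cast Fintype.card_ne_zero
  calc ∑ x ∈ F, ∏ i, b (κ x i) ^ (((Fintype.card ι : ℝ) - 1) / Fintype.card ι)
      ≤ ∑ x ∈ F, ∑ i, (Fintype.card ι : ℝ)⁻¹ * ∏ j : {j // j ≠ i}, b (κ x j.val) :=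
        Finset.sum_le_sum fun x _ => prod_rpow_le_average_prod_ne fun i => hb _
    _ = ∑ i, (Fintype.card ι : ℝ)⁻¹ * ∑ x ∈ F, ∏ j : {j // j ≠ i}, b (κ x j.val) := by
        rw [Finset.sum_comm]
        simp_rw [Finset.mul_sum]
    _ ≤ ∑ _i : ι, (Fintype.card ι : ℝ)⁻¹ * (∑' a, b a) ^ (Fintype.card ι - 1) := by
        gcongr with i
        exact sum_prod_ne_le_tsum_pow κ i (hκ i) hb hsum F
    _ = (∑' a, b a) ^ (Fintype.card ι - 1) := by simp [hN]

theorem summable_one_add_sq_rpow_neg {r : ℝ} (hr : 1 / 2 < r) :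
    Summable fun k : ℤ => (1 + (k : ℝ) ^ 2) ^ (-r) := by
  refine Summable.of_norm_bounded_eventually
    (Real.summable_abs_int_rpow (show 1 < 2 * r by linarith)) ?_
  filter_upwards [(Set.finite_singleton (0 : ℤ)).compl_mem_cofinite] with k hk
  have hk0 : (0 : ℝ) < |(k : ℝ)| := abs_pos.2 (by exact_mod_cast hk)
  rw [Real.norm_of_nonneg (by positivity), show -(2 * r) = 2 * (-r) by ring,
    Real.rpow_mul hk0.le, Real.rpow_two, sq_abs]
  refine Real.rpow_le_rpow_of_nonpos ?_ (by linarith) (by linarith)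
  rw [← sq_abs]
  positivity

/-- The embedding of `H^s` into `ℓ^p` for `p = 2n / (2n - 1)`. -/
theorem exists_tsum_norm_rpow_le {n : ℕ} (hn : 1 ≤ n) {s : ℝ}
    (hs : 1 / 2 - 1 / (2 * n) < s) :
    ∃ C > (0 : ℝ), ∀ ψ : ℤ → ℂ,
      Summable (fun k : ℤ => (1 + (k : ℝ) ^ 2) ^ s * ‖ψ k‖ ^ 2) →
      Summable (fun k : ℤ => ‖ψ k‖ ^ (2 * n / (2 * n - 1) : ℝ)) ∧
      (∑' k : ℤ, ‖ψ k‖ ^ (2 * n / (2 * n - 1) : ℝ)) ^ (2 * n - 1) ≤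
        C * (∑' k : ℤ, (1 + (k : ℝ) ^ 2) ^ s * ‖ψ k‖ ^ 2) ^ n := by
  rcases hn.eq_or_lt with rfl | hn
  · refine ⟨1, one_pos, fun ψ hψ => ?_⟩
    have hs0 : 0 < s := by norm_num at hs; exact hs
    have hle : ∀ k : ℤ, ‖ψ k‖ ^ 2 ≤ (1 + (k : ℝ) ^ 2) ^ s * ‖ψ k‖ ^ 2 := fun k =>
      le_mul_of_one_le_left (by positivity)
        (Real.one_le_rpow (by linarith [sq_nonneg (k : ℝ)]) hs0.le)
    have hsum := Summable.of_nonneg_of_le (fun k => by positivity) hle hψ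
    norm_num
    exact ⟨hsum, hsum.tsum_le_tsum hle hψ⟩
  · have hn' : (2 : ℝ) ≤ n := by exact_mod_cast hn
    have hn1 : (0 : ℝ) < n - 1 := by linarith
    have h2n : (0 : ℝ) < 2 * n - 1 := by linarith
    have h2n_ne : (n * 2 - 1 : ℝ) ≠ 0 := by linarith
    have hT := summable_one_add_sq_rpow_neg (r := s * n / (n - 1)) (by
      rw [lt_div_iff₀ hn1]
      have := mul_lt_mul_of_pos_right hs (show (0 : ℝ) < n by linarith)
      field_simp at this
      linarith)
    have hpq : ((2 * n - 1) / n : ℝ).HolderConjugate ((2 * n - 1) / (n - 1)) := by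
      rw [Real.holderConjugate_iff]
      refine ⟨by rw [lt_div_iff₀ (by linarith)]; linarith, ?_⟩
      field_simp
      ring
    set T := ∑' k : ℤ, (1 + (k : ℝ) ^ 2) ^ (-(s * n / (n - 1)))
    have hT0 : 0 ≤ T := tsum_nonneg fun k => by positivity
    refine ⟨T ^ (n - 1) + 1, by positivity, fun ψ hψ => ?_⟩
    set U := ∑' k : ℤ, (1 + (k : ℝ) ^ 2) ^ s * ‖ψ k‖ ^ 2
    have hU0 : 0 ≤ U := tsum_nonneg fun k => by positivity
    let u : ℤ → ℝ := fun k => ((1 + (k : ℝ) ^ 2) ^ s * ‖ψ k‖ ^ 2) ^ (n / (2 * n - 1) : ℝ)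
    let w : ℤ → ℝ := fun k => (1 + (k : ℝ) ^ 2) ^ (-(s * n / (2 * n - 1)))
    have hu : ∀ k, u k ^ ((2 * n - 1) / n : ℝ) = (1 + (k : ℝ) ^ 2) ^ s * ‖ψ k‖ ^ 2 := fun k => by
      rw [← Real.rpow_mul (by positivity), show (n / (2 * n - 1) * ((2 * n - 1) / n) : ℝ) = 1 by
        field_simp, Real.rpow_one]
    have hw : ∀ k, w k ^ ((2 * n - 1) / (n - 1) : ℝ) =
        (1 + (k : ℝ) ^ 2) ^ (-(s * n / (n - 1))) := fun k => by
      rw [← Real.rpow_mul (by positivity)]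
      congr 1
      field_simp
    have huw : ∀ k, u k * w k = ‖ψ k‖ ^ (2 * n / (2 * n - 1) : ℝ) := fun k => by
      have hk : (0 : ℝ) < 1 + (k : ℝ) ^ 2 := by positivity
      simp only [u, w]
      rw [Real.mul_rpow (by positivity) (by positivity), ← Real.rpow_mul hk.le, mul_right_comm,
        ← Real.rpow_add hk, ← Real.rpow_natCast ‖ψ k‖, ← Real.rpow_mul (norm_nonneg _),
        show s * (n / (2 * n - 1)) + -(s * n / (2 * n - 1)) = 0 by ring, Real.rpow_zero, one_mul]
      congr 1
      push_cast
      ring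
    obtain ⟨hsum, hle⟩ := Real.summable_and_inner_le_Lp_mul_Lq_tsum_of_nonneg (f := u) (g := w) hpq
      (fun k => by positivity) (fun k => by positivity) (by simpa only [hu] using hψ)
      (by simpa only [hw] using hT)
    simp only [hu, hw, huw] at hsum hle
    refine ⟨hsum, ?_⟩
    have hcast : ((2 * n - 1 : ℕ) : ℝ) = 2 * n - 1 := by
      rw [Nat.cast_sub (by lia)]; push_cast; ring
    have hcast' : ((n - 1 : ℕ) : ℝ) = n - 1 := by
      rw [Nat.cast_sub hn.le]; push_cast; ring
    calc _ ≤ (U ^ (1 / ((2 * n - 1) / n) : ℝ) * T ^ (1 / ((2 * n - 1) / (n - 1)) : ℝ)) ^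
          (2 * n - 1) := pow_le_pow_left₀ (tsum_nonneg fun k => by positivity) hle _
      _ = T ^ (n - 1) * U ^ n := by
        rw [mul_pow, ← Real.rpow_mul_natCast hU0, ← Real.rpow_mul_natCast hT0, hcast,
          ← Real.rpow_natCast T, ← Real.rpow_natCast U, hcast', mul_comm]
        congr 2 <;> field_simp
      _ ≤ (T ^ (n - 1) + 1) * U ^ n := by gcongr; linarith

/-- On the zero-momentum hyperplane each coordinate is determined by the other ones. -/
theorem zeroMomentum_ext {n : ℕ} (i : Fin n ⊕ Fin n)
    (p q : {p : (Fin n → ℤ) × (Fin n → ℤ) // ∑ i, p.1 i = ∑ i, p.2 i})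
    (h : ∀ j, j ≠ i → Sum.elim p.val.1 p.val.2 j = Sum.elim q.val.1 q.val.2 j) : p = q := by
  have hsum : ∀ i (x y : Fin n → ℤ), (∀ j, j ≠ i → x j = y j) → ∑ j, x j = ∑ j, y j → x = y := by
    intro i x y hxy hs
    rw [← Finset.add_sum_erase _ x (Finset.mem_univ i), ← Finset.add_sum_erase _ y
      (Finset.mem_univ i), Finset.sum_congr rfl fun j hj => hxy j (Finset.ne_of_mem_erase hj)] at hs
    funext j
    by_cases hj : j = i
    · rw [hj]; exact add_right_cancel hs
    · exact hxy j hj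
  obtain ⟨⟨x, y⟩, hp⟩ := p
  obtain ⟨⟨x', y'⟩, hq⟩ := q
  simp only at hp hq h
  cases i with
  | inl i =>
    obtain rfl : y = y' := funext fun j => h (.inr j) (by simp)
    obtain rfl := hsum i x x' (fun j hj => h (.inl j) (by simpa using hj)) (hp.trans hq.symm)
    rfl
  | inr i =>
    obtain rfl : x = x' := funext fun j => h (.inl j) (by simp)
    obtain rfl := hsum i y y' (fun j hj => h (.inr j) (by simpa using hj)) (hp.symm.trans hq)
    rfl


/-- For `n ≥ 1` and `1/2 - 1/(2n) < s₁ < 1/2` there is `C > 0` such that for any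
bounded family of coefficients `f` indexed by `ℤ^{2n}` (written as a pair of vectors in `ℤ^n`)
and any `ψ` with finite `H^{s₁}` norm, the sum over zero-momentum multi-indices of
`|f_k| ∏ |ψ_{k_i}|` converges and is bounded by `C · A · ‖ψ‖_{H^{s₁}}^{2n}`. -/
theorem stmt_0 (n : ℕ) (hn : 1 ≤ n) (s₁ : ℝ)
    (hs₁ : 1 / 2 - 1 / (2 * n) < s₁) (hs₁' : s₁ < 1 / 2) :
    ∃ C > (0 : ℝ), ∀ (f : (Fin n → ℤ) × (Fin n → ℤ) → ℂ) (A : ℝ),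
      (∀ p, ‖f p‖ ≤ A) →
      ∀ ψ : ℤ → ℂ,
        Summable (fun k : ℤ => (1 + (k : ℝ) ^ 2) ^ s₁ * ‖ψ k‖ ^ 2) →
        Summable (fun p : {p : (Fin n → ℤ) × (Fin n → ℤ) // ∑ i, p.1 i = ∑ i, p.2 i} =>
            ‖f p.val‖ * ((∏ i, ‖ψ (p.val.1 i)‖) * ∏ i, ‖ψ (p.val.2 i)‖)) ∧
        (∑' p : {p : (Fin n → ℤ) × (Fin n → ℤ) // ∑ i, p.1 i = ∑ i, p.2 i},
            ‖f p.val‖ * ((∏ i, ‖ψ (p.val.1 i)‖) * ∏ i, ‖ψ (p.val.2 i)‖))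
          ≤ C * A * (∑' k : ℤ, (1 + (k : ℝ) ^ 2) ^ s₁ * ‖ψ k‖ ^ 2) ^ n := by
  obtain ⟨C, hC, hCψ⟩ := exists_tsum_norm_rpow_le hn hs₁
  refine ⟨C, hC, fun f A hf ψ hψ => ?_⟩
  obtain ⟨hsum, hle⟩ := hCψ ψ hψ
  have hA : 0 ≤ A := (norm_nonneg _).trans (hf 0)
  have hn' : (1 : ℝ) ≤ n := by exact_mod_cast hn
  have h2n : (0 : ℝ) < 2 * n - 1 := by linarith
  have : Nonempty (Fin n ⊕ Fin n) := ⟨.inl ⟨0, hn⟩⟩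
  have hcard : Fintype.card (Fin n ⊕ Fin n) = 2 * n := by simp [two_mul]
  have hroot : ∀ k, (‖ψ k‖ ^ (2 * n / (2 * n - 1) : ℝ)) ^
      (((2 * n : ℕ) - 1 : ℝ) / (2 * n : ℕ)) = ‖ψ k‖ := fun k => by
    rw [← Real.rpow_mul (norm_nonneg _)]
    push_cast
    rw [show (2 * n / (2 * n - 1) * ((2 * n - 1) / (2 * n)) : ℝ) = 1 by field_simp,
      Real.rpow_one]
  have hbound : ∀ F : Finset {p : (Fin n → ℤ) × (Fin n → ℤ) // ∑ i, p.1 i = ∑ i, p.2 i},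
      ∑ p ∈ F, ‖f p.val‖ * ((∏ i, ‖ψ (p.val.1 i)‖) * ∏ i, ‖ψ (p.val.2 i)‖) ≤
        C * A * (∑' k : ℤ, (1 + (k : ℝ) ^ 2) ^ s₁ * ‖ψ k‖ ^ 2) ^ n := by
    intro F
    have hY := sum_prod_rpow_le_tsum_pow _ zeroMomentum_ext (fun k => by positivity) hsum F
    simp only [hcard, hroot, Fintype.prod_sum_type, Sum.elim_inl, Sum.elim_inr] at hY
    calc _ ≤ ∑ p ∈ F, A * ((∏ i, ‖ψ (p.val.1 i)‖) * ∏ i, ‖ψ (p.val.2 i)‖) := by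
          gcongr with p
          exact hf _
      _ ≤ A * (C * (∑' k : ℤ, (1 + (k : ℝ) ^ 2) ^ s₁ * ‖ψ k‖ ^ 2) ^ n) := by
          rw [← Finset.mul_sum]
          exact mul_le_mul_of_nonneg_left (hY.trans hle) hA
      _ = _ := by ring
  have hsummable := summable_of_sum_le (fun p => by positivity) hbound
  exact ⟨hsummable, hsummable.tsum_le_of_sum_le hbound⟩
end

section
/- Let n, m ≥ 1 be integers and M ≥ 1. There exists a constant C = C(n,m,M) > 0 such that for every 𝚔 ∈ ℤ the following holds. Let k ∈ ℤ^{2n} and j ∈ ℤ^{2m} each satisfy the zero-momentum condition and each satisfy some (M,𝚔)-admissible relation. Assume that the multiset {k_1,…,k_n} ∪ {j_{m+1},…,j_{2m}} equals the multiset {k_{n+1},…,k_{2n}} ∪ {j_1,…,j_m}. Then the multiset {k_1,…,k_n} ∪ {j_{m+1},…,j_{2m}} contains at least two elements (counted with multiplicity) whose absolute value is ≥ |𝚔|/C. -/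
/-- `k ∈ ℤ^{2n}` (written as a pair of vectors in `ℤ^n`) satisfies an `(M,kk)`-admissible
relation: there are integer coefficients of absolute value at most `M` whose combination
with the entries gives `kk`. -/
def AdmissibleRel {n : ℕ} (M : ℝ) (kk : ℤ) (k : (Fin n → ℤ) × (Fin n → ℤ)) : Prop :=
  ∃ a b : Fin n → ℤ, (∀ i, (|a i| : ℝ) ≤ M) ∧ (∀ i, (|b i| : ℝ) ≤ M) ∧
    (∑ i, a i * k.1 i) + (∑ i, b i * k.2 i) = kk

/-- If `p` and `q` have the same sum, every entry of `p` is at most `R` in absolute value, and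
at most one entry of `q` is at least `R`, then all the entries of `q` are bounded by `2 n R`. -/
theorem abs_le_of_sum_eq_of_card_le_one {n : ℕ} {R : ℝ} (hR : 0 ≤ R) {p q : Fin n → ℤ}
    (hsum : ∑ i, p i = ∑ i, q i) (hp : ∀ i, (|p i| : ℝ) ≤ R)
    (hq : (Finset.univ.filter fun i => R ≤ (|q i| : ℝ)).card ≤ 1) (i : Fin n) :
    (|q i| : ℝ) ≤ 2 * n * R := by
  have hn : (1 : ℝ) ≤ n := by exact_mod_cast i.pos
  by_cases hi : R ≤ (|q i| : ℝ)
  · have hother : ∀ l ∈ Finset.univ.erase i, (|q l| : ℝ) ≤ R := by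
      intro l hl
      by_contra! hlt
      exact (Finset.mem_erase.mp hl).1
        (Finset.card_le_one.mp hq l (by simpa using hlt.le) i (by simpa using hi))
    have hqi : (q i : ℝ) = ∑ l, (p l : ℝ) - ∑ l ∈ Finset.univ.erase i, (q l : ℝ) := by
      have h := Finset.add_sum_erase Finset.univ q (Finset.mem_univ i)
      rw [← hsum] at h
      have h' : (q i : ℝ) + ∑ l ∈ Finset.univ.erase i, (q l : ℝ) = ∑ l, (p l : ℝ) := by
        exact_mod_cast h
      linarith
    have hpsum : |∑ l, (p l : ℝ)| ≤ n * R := by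
      refine (Finset.abs_sum_le_sum_abs _ _).trans ?_
      simpa using Finset.sum_le_card_nsmul Finset.univ (fun l => |(p l : ℝ)|) R fun l _ => hp l
    have hqsum : |∑ l ∈ Finset.univ.erase i, (q l : ℝ)| ≤ n * R := by
      refine (Finset.abs_sum_le_sum_abs _ _).trans ((Finset.sum_le_sum hother).trans ?_)
      refine (Finset.sum_le_sum_of_subset_of_nonneg (Finset.erase_subset i _)
        fun _ _ _ => hR).trans ?_
      simp
    calc |(q i : ℝ)| ≤ |∑ l, (p l : ℝ)| + |∑ l ∈ Finset.univ.erase i, (q l : ℝ)| := by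
          rw [hqi]; exact abs_sub _ _
      _ ≤ 2 * n * R := by linarith
  · nlinarith

/-- A linear combination with coefficients bounded by `M` of `n` integers bounded by `B` is bounded
by `n M B`. -/
theorem abs_sum_mul_le {n : ℕ} {M B : ℝ} {a x : Fin n → ℤ} (ha : ∀ i, (|a i| : ℝ) ≤ M)
    (hx : ∀ i, (|x i| : ℝ) ≤ B) : |((∑ i, a i * x i : ℤ) : ℝ)| ≤ n * (M * B) := by
  push_cast
  refine (Finset.abs_sum_le_sum_abs _ _).trans ?_
  have h : ∀ i ∈ Finset.univ, |(a i : ℝ) * x i| ≤ M * B := fun i _ => by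
    rw [abs_mul]
    exact mul_le_mul (ha i) (hx i) (abs_nonneg _) ((abs_nonneg _).trans (ha i))
  simpa using Finset.sum_le_card_nsmul Finset.univ _ _ h

/-- A zero-momentum vector with at most one entry of absolute value at least `R` can only satisfy an
`(M, kk)`-admissible relation if `|kk| ≤ 4 n² M R`. -/
theorem AdmissibleRel.abs_le_of_card_add_card_le_one {n : ℕ} {M R : ℝ} (hR : 0 ≤ R) {kk : ℤ}
    {k : (Fin n → ℤ) × (Fin n → ℤ)} (hk : AdmissibleRel M kk k)
    (hsum : ∑ i, k.1 i = ∑ i, k.2 i)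
    (hcard : (Finset.univ.filter fun i => R ≤ (|k.1 i| : ℝ)).card +
      (Finset.univ.filter fun i => R ≤ (|k.2 i| : ℝ)).card ≤ 1) :
    (|kk| : ℝ) ≤ 4 * n ^ 2 * M * R := by
  have small {p : Fin n → ℤ} (hp : (Finset.univ.filter fun i => R ≤ (|p i| : ℝ)).card = 0)
      (i : Fin n) : (|p i| : ℝ) ≤ R := by
    by_contra! hlt
    exact Finset.filter_eq_empty_iff.mp (Finset.card_eq_zero.mp hp) (Finset.mem_univ i) hlt.le
  have enlarge {p : Fin n → ℤ} (hp : ∀ i, (|p i| : ℝ) ≤ R) (i : Fin n) :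
      (|p i| : ℝ) ≤ 2 * n * R := by
    have hn : (1 : ℝ) ≤ n := by exact_mod_cast i.pos
    nlinarith [hp i]
  have bounds : (∀ i, (|k.1 i| : ℝ) ≤ 2 * n * R) ∧ ∀ i, (|k.2 i| : ℝ) ≤ 2 * n * R := by
    rcases Nat.eq_zero_or_pos (Finset.univ.filter fun i => R ≤ (|k.1 i| : ℝ)).card with h | h
    · exact ⟨enlarge (small h),
        abs_le_of_sum_eq_of_card_le_one hR hsum (small h) (by omega)⟩
    · have h' := small (p := k.2) (by omega)
      exact ⟨abs_le_of_sum_eq_of_card_le_one hR hsum.symm h' (by omega), enlarge h'⟩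
  obtain ⟨a, b, ha, hb, rfl⟩ := hk
  have h₁ := abs_sum_mul_le ha bounds.1
  have h₂ := abs_sum_mul_le hb bounds.2
  rw [Int.cast_add]
  refine (abs_add_le _ _).trans ((add_le_add h₁ h₂).trans_eq ?_)
  ring

/-- Let `k ∈ ℤ^{2n}`, `j ∈ ℤ^{2m}` satisfy the zero momentum condition and an
`(M,kk)`-admissible relation each, and assume the multiset `K₁ ∪ J₂` equals `K₂ ∪ J₁`.
Then `K₁ ∪ J₂` contains (with multiplicity) at least two elements of absolute value
`≥ |kk|/C`, where `C = C(n,m,M)` does not depend on `kk`. -/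
theorem stmt_3 (n m : ℕ) (hn : 1 ≤ n) (hm : 1 ≤ m) (M : ℝ) (hM : 1 ≤ M) :
    ∃ C > (0 : ℝ), ∀ (kk : ℤ) (k : (Fin n → ℤ) × (Fin n → ℤ)) (j : (Fin m → ℤ) × (Fin m → ℤ)),
      (∑ i, k.1 i = ∑ i, k.2 i) →
      (∑ i, j.1 i = ∑ i, j.2 i) →
      AdmissibleRel M kk k →
      AdmissibleRel M kk j →
      (Finset.univ.val.map k.1 + Finset.univ.val.map j.2
        = Finset.univ.val.map k.2 + Finset.univ.val.map j.1) →
      ∃ S : Multiset ℤ, S ≤ Finset.univ.val.map k.1 + Finset.univ.val.map j.2 ∧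
        Multiset.card S = 2 ∧ ∀ x ∈ S, (|kk| : ℝ) / C ≤ (|x| : ℝ) := by
  have hn' : (1 : ℝ) ≤ n := by exact_mod_cast hn
  have hm' : (1 : ℝ) ≤ m := by exact_mod_cast hm
  have hC : 0 < 4 * ((n : ℝ) + m) ^ 2 * M := by positivity
  refine ⟨4 * ((n : ℝ) + m) ^ 2 * M, hC, fun kk k j hk hj hka hja hT => ?_⟩
  set C := 4 * ((n : ℝ) + m) ^ 2 * M with hCdef
  have hR : 0 ≤ (|kk| : ℝ) / C := by positivity
  set R := (|kk| : ℝ) / C with hRdef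
  by_cases hbig : 2 ≤ ((Finset.univ.val.map k.1 + Finset.univ.val.map j.2).filter
      fun x : ℤ => R ≤ (|x| : ℝ)).card
  · obtain ⟨S, hS⟩ := Multiset.card_pos_iff_exists_mem.mp
      ((Nat.choose_pos hbig).trans_eq (Multiset.card_powersetCard 2 _).symm)
    obtain ⟨hS, hScard⟩ := Multiset.mem_powersetCard.mp hS
    exact ⟨S, hS.trans (Multiset.filter_le _ _), hScard,
      fun x hx => (Multiset.mem_filter.mp (Multiset.mem_of_le hS hx)).2⟩
  exfalso
  have card_eq {l : ℕ} (p : Fin l → ℤ) : ((Finset.univ.val.map p).filter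
      fun x : ℤ => R ≤ (|x| : ℝ)).card = (Finset.univ.filter fun i => R ≤ (|p i| : ℝ)).card := by
    rw [Multiset.filter_map, Multiset.card_map]
    rfl
  have hleft := hbig
  rw [Multiset.filter_add, Multiset.card_add, card_eq, card_eq] at hleft
  have hright := hbig
  rw [hT, Multiset.filter_add, Multiset.card_add, card_eq, card_eq] at hright
  have hkk : kk ≠ 0 := by
    rintro rfl
    refine hbig ?_
    rw [Multiset.filter_eq_self.mpr fun x _ => by simp [hRdef]]
    simp
    omega
  have hkk' : 0 < |(kk : ℝ)| := by positivity
  have hRC : R * C = |(kk : ℝ)| := div_mul_cancel₀ _ hC.ne'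
  have hRpos : 0 < R := by positivity
  have contra {c : ℝ} (hc : 0 ≤ c) (hlt : c < n + m) : ¬ (|kk| : ℝ) ≤ 4 * c ^ 2 * M * R := by
    have hsq : c ^ 2 < ((n : ℝ) + m) ^ 2 := by gcongr
    rw [not_le, ← hRC, mul_comm R, hCdef]
    gcongr
  rcases le_or_gt ((Finset.univ.filter fun i => R ≤ (|k.1 i| : ℝ)).card +
      (Finset.univ.filter fun i => R ≤ (|k.2 i| : ℝ)).card) 1 with h | h
  · exact contra (by positivity) (by linarith) (hka.abs_le_of_card_add_card_le_one hR hk h)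
  · exact contra (by positivity) (by linarith)
      (hja.abs_le_of_card_add_card_le_one hR hj (by omega))
end

section
/- Let n ≥ 1 be an integer. There exists a constant C(n) > 0 such that the following holds. Let M ≥ 1, let l_1,…,l_M be pairwise distinct nonzero integers, let m_1,…,m_M be positive integers with m_1+⋯+m_M = n, let b_1,…,b_M be integers not all zero, and let ε > 0. Then ∫_{(0,∞)^M} (∏_{t=1}^M z_t^{m_t}) · 1_{\{ |∑_{t=1}^M b_t z_t / l_t²| < ε \}} · e^{−(z_1+⋯+z_M)} dz_1⋯dz_M ≤ C(n) · (min_{t : b_t ≠ 0} l_t²) · ε. -/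
open MeasureTheory

theorem lintegral_fin_prod_eq_prod {k : ℕ} {f : Fin k → ℝ → ENNReal} (hf : ∀ i, Measurable (f i)) :
    ∫⁻ z : Fin k → ℝ, ∏ i, f i (z i) = ∏ i, ∫⁻ x, f i x := by
  induction k with
  | zero => simp [lintegral_unique, volume_pi]
  | succ k ih =>
    have e := (volume_preserving_piFinSuccAbove (fun _ : Fin (k + 1) => ℝ) 0).symm
    rw [← e.lintegral_comp (by fun_prop), Fin.prod_univ_succ, ← ih fun i => hf i.succ,
      ← lintegral_prod_mul (hf 0).aemeasurable (Measurable.aemeasurable <|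
        Finset.measurable_fun_prod _ fun i _ => (hf i.succ).comp (measurable_pi_apply i))]
    simp [Fin.prod_univ_succ, MeasurableEquiv.piFinSuccAbove, Measure.volume_eq_prod]

theorem lintegral_Ioi_pow_mul_exp_neg (k : ℕ) :
    ∫⁻ x in Set.Ioi (0 : ℝ), ENNReal.ofReal (x ^ k * Real.exp (-x)) = (k.factorial : ENNReal) := by
  have hi := Real.GammaIntegral_convergent (s := k + 1) (by positivity)
  have hg := Real.Gamma_eq_integral (s := k + 1) (by positivity)
  simp only [add_sub_cancel_right, Real.rpow_natCast, mul_comm (Real.exp _)] at hi hg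
  rw [← ofReal_integral_eq_lintegral_ofReal hi, ← hg, Real.Gamma_nat_eq_factorial,
    ENNReal.ofReal_natCast]
  filter_upwards [ae_restrict_mem measurableSet_Ioi] with x hx
  have : 0 < x := hx
  positivity

theorem pow_mul_exp_neg_le_factorial (k : ℕ) {x : ℝ} (hx : 0 ≤ x) :
    x ^ k * Real.exp (-x) ≤ k.factorial := by
  rw [Real.exp_neg, ← div_eq_mul_inv, div_le_iff₀ (Real.exp_pos x), mul_comm]
  exact (div_le_iff₀ (by positivity)).1 (Real.pow_div_factorial_le_exp x hx k)

theorem volume_abs_mul_add_lt_le {a c δ : ℝ} (ha : 0 < |a|) :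
    volume {x : ℝ | |a * x + c| < δ} ≤ ENNReal.ofReal (2 * (δ / |a|)) := by
  have : {x : ℝ | |a * x + c| < δ} ⊆ Metric.ball (-c / a) (δ / |a|) := by
    intro x hx
    have ha' : a ≠ 0 := abs_pos.1 ha
    rw [Metric.mem_ball, Real.dist_eq, lt_div_iff₀ ha, ← abs_mul]
    have : (x - -c / a) * a = a * x + c := by
      field_simp
      ring
    exact this ▸ hx
  exact (measure_mono this).trans (Real.volume_ball _ _).le

theorem setLIntegral_prod_pow_mul_exp_neg_le {k : ℕ} (m : Fin (k + 1) → ℕ) (a : Fin (k + 1) → ℝ)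
    (i : Fin (k + 1)) (hi : a i ≠ 0) (ε : ℝ) :
    ∫⁻ z : Fin (k + 1) → ℝ in {z | (∀ t, 0 < z t) ∧ |∑ t, a t * z t| < ε},
        ENNReal.ofReal ((∏ t, z t ^ m t) * Real.exp (-(∑ t, z t)))
      ≤ (∏ t, ((m t).factorial : ENNReal)) * ENNReal.ofReal (2 * (ε / |a i|)) := by
  set S : Set (Fin (k + 1) → ℝ) := {z | (∀ t, 0 < z t) ∧ |∑ t, a t * z t| < ε}
  have hS : MeasurableSet S := by
    have h1 : MeasurableSet {z : Fin (k + 1) → ℝ | ∀ t, 0 < z t} := by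
      simp only [Set.ofPred_forall]
      exact MeasurableSet.iInter fun t => measurableSet_lt measurable_const (measurable_pi_apply t)
    have h2 : MeasurableSet {z : Fin (k + 1) → ℝ | |∑ t, a t * z t| < ε} :=
      measurableSet_lt (by fun_prop) measurable_const
    exact h1.inter h2
  let g : Fin (k + 1) → ℝ → ENNReal := fun t =>
    (Set.Ioi 0).indicator fun x => ENNReal.ofReal (x ^ m t * Real.exp (-x))
  have hg : ∀ t, Measurable (g t) := fun t =>
    Measurable.indicator (by fun_prop) measurableSet_Ioi
  have hgi : ∀ t, ∫⁻ x, g t x = (m t).factorial := fun t => by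
    rw [lintegral_indicator measurableSet_Ioi, lintegral_Ioi_pow_mul_exp_neg]
  have hgle : ∀ t x, g t x ≤ (m t).factorial := fun t x => by
    refine Set.indicator_apply_le' (fun hx => ?_) fun _ => zero_le
    exact ENNReal.ofReal_le_of_le_toReal
      (by simpa using pow_mul_exp_neg_le_factorial (m t) (Set.mem_Ioi.1 hx).le)
  have hSg : ∀ z ∈ S, ENNReal.ofReal ((∏ t, z t ^ m t) * Real.exp (-(∑ t, z t)))
      = ∏ t, g t (z t) := by
    rintro z ⟨hz, -⟩
    rw [← Finset.sum_neg_distrib, Real.exp_sum, ← Finset.prod_mul_distrib,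
      ENNReal.ofReal_prod_of_nonneg fun t _ => by have := hz t; positivity]
    exact Finset.prod_congr rfl fun t _ =>
      (Set.indicator_of_mem (Set.mem_Ioi.2 (hz t))
        fun x => ENNReal.ofReal (x ^ m t * Real.exp (-x))).symm
  have hG : Measurable (S.indicator fun z => ∏ t, g t (z t)) :=
    Measurable.indicator (by fun_prop) hS
  rw [setLIntegral_congr_fun hS hSg, ← lintegral_indicator hS,
    ← (volume_preserving_piFinSuccAbove (fun _ : Fin (k + 1) => ℝ) i).symm.lintegral_comp hG,
    Measure.volume_eq_prod, lintegral_prod_symm' _ (by fun_prop)]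
  have key : ∀ y : Fin k → ℝ, ∫⁻ x, S.indicator (fun z => ∏ t, g t (z t))
        ((MeasurableEquiv.piFinSuccAbove (fun _ : Fin (k + 1) => ℝ) i).symm (x, y))
      ≤ ((m i).factorial * ENNReal.ofReal (2 * (ε / |a i|)))
        * ∏ j, g (i.succAbove j) (y j) := by
    intro y
    set T : Set ℝ := {x | |a i * x + ∑ j, a (i.succAbove j) * y j| < ε}
    have hT : MeasurableSet T := measurableSet_lt (by fun_prop) measurable_const
    calc
      _ ≤ ∫⁻ x, T.indicator
            (fun _ => (m i).factorial * ∏ j, g (i.succAbove j) (y j)) x := by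
        refine lintegral_mono fun x => Set.indicator_apply_le' (fun hx => ?_) fun _ => zero_le
        have hxi : (MeasurableEquiv.piFinSuccAbove (fun _ : Fin (k + 1) => ℝ) i).symm (x, y) i
            = x := Fin.insertNth_apply_same (α := fun _ => ℝ) i x y
        have hxj : ∀ j, (MeasurableEquiv.piFinSuccAbove (fun _ : Fin (k + 1) => ℝ) i).symm (x, y)
            (i.succAbove j) = y j := Fin.insertNth_apply_succAbove (α := fun _ => ℝ) i x y
        have hxT : x ∈ T := by
          have := hx.2
          simp only [Fin.sum_univ_succAbove _ i, hxi, hxj] at this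
          exact this
        rw [Set.indicator_of_mem hxT, Fin.prod_univ_succAbove _ i]
        simp only [hxi, hxj]
        exact mul_le_mul_left (hgle i x) _
      _ = (m i).factorial * (∏ j, g (i.succAbove j) (y j)) * volume T :=
        lintegral_indicator_const hT _
      _ ≤ (m i).factorial * (∏ j, g (i.succAbove j) (y j))
            * ENNReal.ofReal (2 * (ε / |a i|)) := by
        gcongr
        exact volume_abs_mul_add_lt_le (abs_pos.2 hi)
      _ = _ := by ring
  refine (lintegral_mono key).trans_eq ?_
  rw [lintegral_const_mul _ (by fun_prop), lintegral_fin_prod_eq_prod fun j => hg _,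
    Fin.prod_univ_succAbove _ i]
  simp only [hgi]
  ring

/-- small–denominator measure estimate.  For `n ≥ 1` there is `C(n) > 0` such that
for pairwise distinct nonzero integers `l₁,…,l_M`, positive integers `m₁+⋯+m_M = n`, integers
`b₁,…,b_M` not all zero, and `ε > 0`,
`∫_{(0,∞)^M} (∏ z_t^{m_t}) 1_{|∑ b_t z_t / l_t²| < ε} e^{-∑ z_t} dz ≤ C(n) (min_{b_t ≠ 0} l_t²) ε`. -/
theorem stmt_4 (n : ℕ) (hn : 1 ≤ n) :
    ∃ C > (0 : ℝ), ∀ (M : ℕ) (_ : 1 ≤ M) (l : Fin M → ℤ) (m : Fin M → ℕ) (b : Fin M → ℤ)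
      (ε : ℝ) (_ : 0 < ε),
      Function.Injective l → (∀ t, l t ≠ 0) → (∀ t, 0 < m t) → (∑ t, m t = n) →
      ∀ hne : (Finset.univ.filter fun t => b t ≠ 0).Nonempty,
      (∫⁻ z : Fin M → ℝ in
          {z | (∀ t, 0 < z t) ∧ |∑ t, (b t : ℝ) * z t / (l t : ℝ) ^ 2| < ε},
          ENNReal.ofReal ((∏ t, z t ^ m t) * Real.exp (-(∑ t, z t))))
        ≤ ENNReal.ofReal
            (C * (((Finset.univ.filter fun t => b t ≠ 0).inf' hne fun t => (l t : ℝ) ^ 2)) * ε) := by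
  refine ⟨2 * n.factorial, by positivity, ?_⟩
  intro M hM l m b ε hε _ hl _ hsum hne
  obtain ⟨k, rfl⟩ := Nat.exists_eq_add_of_le' hM
  obtain ⟨i, hi, hmin⟩ := Finset.exists_mem_eq_inf' hne fun t => (l t : ℝ) ^ 2
  have hbi : b i ≠ 0 := (Finset.mem_filter.1 hi).2
  have hbR : (1 : ℝ) ≤ |(b i : ℝ)| := by exact_mod_cast Int.one_le_abs hbi
  have hlR : 0 < (l i : ℝ) ^ 2 := by
    have : (l i : ℝ) ≠ 0 := by exact_mod_cast hl i
    positivity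
  have hfac : ∏ t, (m t).factorial ≤ n.factorial :=
    hsum ▸ Nat.le_of_dvd (Nat.factorial_pos _) (Nat.prod_factorial_dvd_factorial_sum _ _)
  have hmain := setLIntegral_prod_pow_mul_exp_neg_le m (fun t => (b t : ℝ) / (l t : ℝ) ^ 2) i
    (div_ne_zero (by exact_mod_cast hbi) hlR.ne') ε
  simp only [div_mul_eq_mul_div] at hmain
  rw [hmin]
  refine hmain.trans ?_
  rw [← Nat.cast_prod, ← ENNReal.ofReal_natCast, ← ENNReal.ofReal_mul (by positivity)]
  refine ENNReal.ofReal_le_ofReal ?_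
  have hwidth : ε / |(b i : ℝ) / (l i : ℝ) ^ 2| ≤ (l i : ℝ) ^ 2 * ε := by
    rw [abs_div, abs_of_pos hlR, div_div_eq_mul_div, mul_comm]
    exact div_le_self (by positivity) hbR
  calc ((∏ t, (m t).factorial : ℕ) : ℝ) * (2 * (ε / |(b i : ℝ) / (l i : ℝ) ^ 2|))
      ≤ n.factorial * (2 * ((l i : ℝ) ^ 2 * ε)) := by gcongr
    _ = 2 * n.factorial * (l i : ℝ) ^ 2 * ε := by ring
end

section
/- Let n ≥ 1 be an integer. Then ∑ 1/( ∏_{i=1}^n (1+k_i²)(1+j_{n+i}²) ) ≤ ((2n)!)² · (∑_{l∈ℤ} 1/(1+l²))^{2n}, where the sum runs over all pairs (k, j) ∈ ℤ^{2n} × ℤ^{2n} such that both k and j satisfy the zero-momentum condition and the multiset {k_1,…,k_n} ∪ {j_{n+1},…,j_{2n}} equals the multiset {k_{n+1},…,k_{2n}} ∪ {j_1,…,j_n}. In particular this sum converges. -/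
/-- Pairs `(k,j) ∈ ℤ^{2n} × ℤ^{2n}` (each written as a pair of vectors in `ℤ^n`) such that
both satisfy the zero-momentum condition and the multiset `K₁ ∪ J₂` equals the multiset
`K₂ ∪ J₁`. -/
def PairIdx (n : ℕ) : Type :=
  {p : ((Fin n → ℤ) × (Fin n → ℤ)) × ((Fin n → ℤ) × (Fin n → ℤ)) //
    (∑ i, p.1.1 i = ∑ i, p.1.2 i) ∧ (∑ i, p.2.1 i = ∑ i, p.2.2 i) ∧
    (Finset.univ.val.map p.1.1 + Finset.univ.val.map p.2.2
      = Finset.univ.val.map p.1.2 + Finset.univ.val.map p.2.1)}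

/-- Two families with the same multiset of values differ by a permutation of the indices. -/
theorem exists_perm_comp_eq_of_map_univ_eq {ι α : Type*} [Fintype ι] {a b : ι → α}
    (h : Finset.univ.val.map a = Finset.univ.val.map b) :
    ∃ σ : Equiv.Perm ι, a ∘ σ = b := by
  classical
  have hcard (x : α) : Nonempty ({i // b i = x} ≃ {i // a i = x}) := by
    refine ⟨Fintype.equivOfCardEq ?_⟩
    have hx := congrArg (Multiset.count x) h
    simp only [Multiset.count_map] at hx
    simp only [Fintype.card_subtype, Finset.card_def, Finset.filter_val, eq_comm (b := x)]
    exact hx.symm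
  let e (x : α) := (hcard x).some
  refine ⟨(Equiv.sigmaFiberEquiv b).symm.trans
    ((Equiv.sigmaCongrRight e).trans (Equiv.sigmaFiberEquiv a)), ?_⟩
  funext i
  exact (e (b i) ⟨i, rfl⟩).2

/-- A sum of products over finitely many families is at most a power of the total sum. -/
theorem sum_prod_le_tsum_pow_card {ι α : Type*} [Fintype ι] {f : α → ℝ} (hf : 0 ≤ f)
    (hs : Summable f) (s : Finset (ι → α)) :
    ∑ a ∈ s, ∏ i, f (a i) ≤ (∑' l, f l) ^ Fintype.card ι := by
  classical
  calc ∑ a ∈ s, ∏ i, f (a i)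
      ≤ ∑ a ∈ Fintype.piFinset fun i => s.image fun a => a i, ∏ i, f (a i) := by
        refine Finset.sum_le_sum_of_subset_of_nonneg (fun a ha => ?_)
          fun a _ _ => Finset.prod_nonneg fun i _ => hf _
        exact Fintype.mem_piFinset.2 fun i => Finset.mem_image_of_mem _ ha
    _ = ∏ i, ∑ l ∈ s.image fun a => a i, f l := (Finset.prod_univ_sum _ fun _ => f).symm
    _ ≤ ∏ _i : ι, ∑' l, f l :=
        Finset.prod_le_prod (fun i _ => Finset.sum_nonneg fun l _ => hf l)
          fun i _ => hs.sum_le_tsum _ fun l _ => hf l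
    _ = (∑' l, f l) ^ Fintype.card ι := by simp

/-- Summing a product over objects encoded by a family together with a label from a finite type
costs at most the number of labels. -/
theorem sum_prod_le_card_mul_tsum_pow_card {β κ ι α : Type*} [Fintype κ] [Fintype ι]
    {f : α → ℝ} (hf : 0 ≤ f) (hs : Summable f) {c : β → κ} {w : β → ι → α}
    (hinj : Function.Injective fun p => (c p, w p)) (u : Finset β) :
    ∑ p ∈ u, ∏ i, f (w p i) ≤ Fintype.card κ * (∑' l, f l) ^ Fintype.card ι := by
  classical
  calc ∑ p ∈ u, ∏ i, f (w p i)
      = ∑ x ∈ u.image fun p => (c p, w p), ∏ i, f (x.2 i) :=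
        (Finset.sum_image (f := fun x => ∏ i, f (x.2 i)) hinj.injOn).symm
    _ ≤ ∑ x ∈ Finset.univ ×ˢ u.image w, ∏ i, f (x.2 i) := by
        refine Finset.sum_le_sum_of_subset_of_nonneg ?_
          fun x _ _ => Finset.prod_nonneg fun i _ => hf _
        exact Finset.image_subset_iff.2 fun p hp =>
          Finset.mk_mem_product (Finset.mem_univ _) (Finset.mem_image_of_mem w hp)
    _ = Fintype.card κ * ∑ a ∈ u.image w, ∏ i, f (a i) := by
        simp [Finset.sum_product]
    _ ≤ Fintype.card κ * (∑' l, f l) ^ Fintype.card ι :=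
        mul_le_mul_of_nonneg_left (sum_prod_le_tsum_pow_card hf hs _) (Nat.cast_nonneg _)

theorem summable_one_div_one_add_int_sq : Summable fun l : ℤ => 1 / (1 + (l : ℝ) ^ 2) := by
  refine Summable.of_norm_bounded_eventually
    (Real.summable_one_div_int_pow.2 one_lt_two) ?_
  refine (Set.finite_singleton (0 : ℤ)).subset fun l hl => ?_
  by_contra h0
  have hpos : 0 < (l : ℝ) ^ 2 := by
    have : (l : ℝ) ≠ 0 := by exact_mod_cast h0
    positivity
  refine hl (Set.mem_ofPred.2 ?_)
  rw [Real.norm_of_nonneg (by positivity)]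
  exact one_div_le_one_div_of_le hpos (by linarith)

/-- A pair of vectors is determined by the entries `K₁`, `J₂` and a permutation. -/
theorem PairIdx.exists_perm {n : ℕ} (p : PairIdx n) :
    ∃ σ : Equiv.Perm (Fin n ⊕ Fin n),
      Sum.elim p.val.1.1 p.val.2.2 ∘ σ = Sum.elim p.val.1.2 p.val.2.1 := by
  apply exists_perm_comp_eq_of_map_univ_eq
  simpa only [← Finset.univ_disjSum_univ, Finset.val_disjSum, Multiset.map_disjSum,
    Sum.elim_inl, Sum.elim_inr] using p.2.2.2

theorem PairIdx.sum_le {n : ℕ} (u : Finset (PairIdx n)) :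
    ∑ p ∈ u, 1 / ∏ i, ((1 + (p.val.1.1 i : ℝ) ^ 2) * (1 + (p.val.2.2 i : ℝ) ^ 2))
      ≤ ((2 * n).factorial : ℝ) * (∑' l : ℤ, 1 / (1 + (l : ℝ) ^ 2)) ^ (2 * n) := by
  choose σ hσ using PairIdx.exists_perm (n := n)
  have hinj : Function.Injective fun p : PairIdx n =>
      (σ p, Sum.elim p.val.1.1 p.val.2.2) := by
    intro p q hpq
    obtain ⟨h₁, h₂⟩ := Prod.mk.inj hpq
    have h₃ : Sum.elim p.val.1.2 p.val.2.1 = Sum.elim q.val.1.2 q.val.2.1 := by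
      rw [← hσ p, ← hσ q, h₁, h₂]
    have hk₁ : p.val.1.1 = q.val.1.1 := congrArg (· ∘ Sum.inl) h₂
    have hj₂ : p.val.2.2 = q.val.2.2 := congrArg (· ∘ Sum.inr) h₂
    have hk₂ : p.val.1.2 = q.val.1.2 := congrArg (· ∘ Sum.inl) h₃
    have hj₁ : p.val.2.1 = q.val.2.1 := congrArg (· ∘ Sum.inr) h₃
    exact Subtype.ext (Prod.ext (Prod.ext hk₁ hk₂) (Prod.ext hj₁ hj₂))
  have h := sum_prod_le_card_mul_tsum_pow_card
    (f := fun l : ℤ => 1 / (1 + (l : ℝ) ^ 2)) (fun l => by positivity)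
    summable_one_div_one_add_int_sq hinj u
  rw [Fintype.card_perm, Fintype.card_sum, Fintype.card_fin, ← two_mul] at h
  refine le_of_eq_of_le (Finset.sum_congr rfl fun p _ => ?_) h
  simp [Fintype.prod_sum_type, Finset.prod_mul_distrib, mul_comm]

/-- `∑_{(k,j)} 1/∏_{i=1}^n (1+k_i²)(1+j_{n+i}²) ≤ ((2n)!)² (∑_{l∈ℤ} 1/(1+l²))^{2n}`,
the sum running over pairs of zero-momentum vectors with `K₁ ∪ J₂ = K₂ ∪ J₁` as multisets;
in particular the sum converges. -/
theorem stmt_15 (n : ℕ) (hn : 1 ≤ n) :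
    Summable (fun p : PairIdx n =>
        1 / ∏ i, ((1 + (p.val.1.1 i : ℝ) ^ 2) * (1 + (p.val.2.2 i : ℝ) ^ 2))) ∧
    (∑' p : PairIdx n,
        1 / ∏ i, ((1 + (p.val.1.1 i : ℝ) ^ 2) * (1 + (p.val.2.2 i : ℝ) ^ 2)))
      ≤ ((2 * n).factorial : ℝ) ^ 2 * (∑' l : ℤ, 1 / (1 + (l : ℝ) ^ 2)) ^ (2 * n) := by
  have hnonneg : 0 ≤ fun p : PairIdx n =>
      1 / ∏ i, ((1 + (p.val.1.1 i : ℝ) ^ 2) * (1 + (p.val.2.2 i : ℝ) ^ 2)) :=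
    fun p => one_div_nonneg.2 (Finset.prod_nonneg fun i _ => by positivity)
  refine ⟨summable_of_sum_le hnonneg PairIdx.sum_le,
    (Real.tsum_le_of_sum_le hnonneg PairIdx.sum_le).trans ?_⟩
  refine mul_le_mul_of_nonneg_right (le_self_pow₀ ?_ two_ne_zero)
    (pow_nonneg (tsum_nonneg fun l => by positivity) _)
  exact_mod_cast Nat.one_le_iff_ne_zero.2 (Nat.factorial_ne_zero _)
end
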